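/- arXiv:0803.3789 — 3 statements merged into one kernel-verified Lean document; each statement's English description precedes it below -/
import Mathlib

section
/- Let n ≥ 1 and m ≥ 2 be integers and set p = 2m + n − 3 and q = m + n − 2. Let f : ℝ → ℝ be twice differentiable on (0,∞) with f'(r) > 0 for all r > 0, suppose f''(r) + p·f'(r)/r − q·(f'(r))² > 0 for all r > 0, and suppose exp(−q·f(r)) → 0 as r → ∞. Then for every a > 0 there exists a constant K such that f(s) ≤ K + ((p−1)/q)·log s for all s > a. -/
theorem log_bound_aux (j : ℕ) (hj : 1 ≤ j) (q : ℝ) (hq : 0 < q) (f : ℝ → ℝ)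
    (hdiff : ∀ r : ℝ, 0 < r → DifferentiableAt ℝ f r)
    (hdiff2 : ∀ r : ℝ, 0 < r → DifferentiableAt ℝ (deriv f) r)
    (hpos : ∀ r : ℝ, 0 < r → 0 < deriv f r)
    (hineq : ∀ r : ℝ, 0 < r →
      0 < deriv (deriv f) r + ((j : ℝ) + 1) * deriv f r / r - q * (deriv f r) ^ 2)
    (hlim : Filter.Tendsto (fun r : ℝ => Real.exp (-q * f r)) Filter.atTop (nhds 0))
    (a : ℝ) (ha : 0 < a) : ∃ K : ℝ, ∀ s : ℝ, a < s →
      f s ≤ K + ((j : ℝ) / q) * Real.log s := by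
  have hj0 : (0 : ℝ) < j := by exact_mod_cast hj
  have hE : ∀ r : ℝ, 0 < r → HasDerivAt (fun r => Real.exp (-q * f r))
      (Real.exp (-q * f r) * (-q * deriv f r)) r := fun r hr =>
    ((hdiff r hr).hasDerivAt.const_mul (-q)).exp
  have hG : ∀ r : ℝ, 0 < r → HasDerivAt (fun r => r ^ (j + 1) * deriv f r * Real.exp (-q * f r))
      (r ^ (j + 1) * Real.exp (-q * f r) *
        (deriv (deriv f) r + ((j : ℝ) + 1) * deriv f r / r - q * (deriv f r) ^ 2)) r := by
    intro r hr
    have h := ((hasDerivAt_pow (j + 1) r).mul (hdiff2 r hr).hasDerivAt).mul (hE r hr)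
    refine h.congr_deriv ?_
    simp only [Pi.mul_apply, Nat.add_sub_cancel]
    push_cast
    field_simp
    ring
  have hGm : MonotoneOn (fun r => r ^ (j + 1) * deriv f r * Real.exp (-q * f r)) (Set.Ici a) := by
    apply monotoneOn_of_deriv_nonneg (convex_Ici a)
    · intro r hr
      exact (hG r (ha.trans_le hr)).continuousAt.continuousWithinAt
    · intro r hr
      rw [interior_Ici] at hr
      exact (hG r (ha.trans hr)).differentiableAt.differentiableWithinAt
    · intro r hr
      rw [interior_Ici] at hr
      have hr0 : 0 < r := ha.trans hr
      rw [(hG r hr0).deriv]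
      have := hineq r hr0
      positivity
  obtain ⟨C, hCdef⟩ : ∃ C, C = a ^ (j + 1) * deriv f a * Real.exp (-q * f a) := ⟨_, rfl⟩
  have hC : 0 < C := by
    have := hpos a ha
    rw [hCdef]; positivity
  have hH : ∀ r : ℝ, 0 < r → HasDerivAt
      (fun r => -(Real.exp (-q * f r)) / q + C / j * (r ^ j)⁻¹)
      (deriv f r * Real.exp (-q * f r) - C / r ^ (j + 1)) r := by
    intro r hr
    have h := ((hE r hr).neg.div_const q).add
      (((hasDerivAt_pow j r).inv (pow_pos hr j).ne').const_mul (C / j))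
    refine h.congr_deriv ?_
    obtain ⟨i, rfl⟩ : ∃ i, j = i + 1 := ⟨j - 1, by omega⟩
    simp only [Nat.add_sub_cancel]
    field_simp
    ring
  have hHm : MonotoneOn (fun r => -(Real.exp (-q * f r)) / q + C / j * (r ^ j)⁻¹) (Set.Ici a) := by
    apply monotoneOn_of_deriv_nonneg (convex_Ici a)
    · intro r hr
      exact (hH r (ha.trans_le hr)).continuousAt.continuousWithinAt
    · intro r hr
      rw [interior_Ici] at hr
      exact (hH r (ha.trans hr)).differentiableAt.differentiableWithinAt
    · intro r hr
      rw [interior_Ici] at hr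
      have hr0 : 0 < r := ha.trans hr
      rw [(hH r hr0).deriv, sub_nonneg, div_le_iff₀ (by positivity)]
      have h := hGm (Set.mem_Ici.2 le_rfl) (Set.mem_Ici.2 (le_of_lt hr)) (le_of_lt hr)
      simp only [← hCdef] at h
      linarith
  have hHlim : Filter.Tendsto (fun r => -(Real.exp (-q * f r)) / q + C / j * (r ^ j)⁻¹)
      Filter.atTop (nhds 0) := by
    have h1 := (hlim.neg.div_const q)
    have h2 := ((Filter.tendsto_pow_atTop (α := ℝ) (n := j) (by omega)).inv_tendsto_atTop).const_mul
      (C / j)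
    have h := h1.add h2
    simpa using h
  refine ⟨-(Real.log (q * C / j)) / q, fun s hs => ?_⟩
  have hs0 : 0 < s := ha.trans hs
  have hle : -(Real.exp (-q * f s)) / q + C / j * (s ^ j)⁻¹ ≤ 0 := by
    refine ge_of_tendsto hHlim ?_
    filter_upwards [Filter.eventually_ge_atTop s] with r hr
    exact hHm (Set.mem_Ici.2 hs.le) (Set.mem_Ici.2 (hs.le.trans hr)) hr
  have hle2 : q * C / j * (s ^ j)⁻¹ ≤ Real.exp (-q * f s) := by
    have h := mul_le_mul_of_nonneg_left hle hq.le
    have e : q * (-(Real.exp (-q * f s)) / q + C / j * (s ^ j)⁻¹)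
        = -(Real.exp (-q * f s)) + q * C / j * (s ^ j)⁻¹ := by field_simp
    rw [e] at h
    linarith
  have hl := Real.log_le_log (by positivity) hle2
  rw [Real.log_exp, Real.log_mul (by positivity) (by positivity), Real.log_inv, Real.log_pow] at hl
  have e : -(Real.log (q * C / j)) / q + (j : ℝ) / q * Real.log s
      = (-(Real.log (q * C / j)) + j * Real.log s) / q := by ring
  rw [e, le_div_iff₀ hq]
  linarith

/-- Logarithmic upper bound (inequality (20) of Theorem 2's proof): for integers
`n ≥ 1`, `m ≥ 2`, with `p = 2m+n-3`, `q = m+n-2`, if `f` is twice differentiable on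
`(0,∞)` with `f' > 0` there, `f'' r + p f' r / r - q (f' r)^2 > 0` for all `r > 0`,
and `exp (-q * f r) → 0` as `r → ∞`, then for every `a > 0` there is a constant `K`
with `f s ≤ K + ((p-1)/q) * log s` for all `s > a`. -/
theorem log_upper_bound (n m : ℕ) (hn : 1 ≤ n) (hm : 2 ≤ m) (f : ℝ → ℝ)
    (hdiff : ∀ r : ℝ, 0 < r → DifferentiableAt ℝ f r)
    (hdiff2 : ∀ r : ℝ, 0 < r → DifferentiableAt ℝ (deriv f) r)
    (hpos : ∀ r : ℝ, 0 < r → 0 < deriv f r)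
    (hineq : ∀ r : ℝ, 0 < r →
      0 < deriv (deriv f) r + (2 * (m : ℝ) + n - 3) * deriv f r / r
          - ((m : ℝ) + n - 2) * (deriv f r) ^ 2)
    (hlim : Filter.Tendsto (fun r : ℝ => Real.exp (-((m : ℝ) + n - 2) * f r))
      Filter.atTop (nhds 0)) :
    ∀ a : ℝ, 0 < a → ∃ K : ℝ, ∀ s : ℝ, a < s →
      f s ≤ K + ((2 * (m : ℝ) + n - 3 - 1) / ((m : ℝ) + n - 2)) * Real.log s := by
  intro a ha
  have hc : ((2 * m + n - 4 : ℕ) : ℝ) = 2 * (m : ℝ) + n - 4 := by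
    rw [Nat.cast_sub (by omega)]; push_cast; ring
  have hm' : (2 : ℝ) ≤ m := by exact_mod_cast hm
  have hn' : (1 : ℝ) ≤ n := by exact_mod_cast hn
  have e1 : 2 * (m : ℝ) + n - 3 = ((2 * m + n - 4 : ℕ) : ℝ) + 1 := by rw [hc]; ring
  have e2 : 2 * (m : ℝ) + n - 3 - 1 = ((2 * m + n - 4 : ℕ) : ℝ) := by rw [hc]; ring
  rw [e2]
  refine log_bound_aux (2 * m + n - 4) (by omega) ((m : ℝ) + n - 2) (by linarith) f
    hdiff hdiff2 hpos ?_ hlim a ha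
  intro r hr
  rw [← e1]
  exact hineq r hr
end

section
/- Let n ≥ 1 and m ≥ 2 be integers and set m₀ = (m−1)/(n+m−1). Let f : ℝ → ℝ be twice differentiable on (0,∞) with f'(r) > 0 for all r > 0, and suppose (n+m−1)·f''(r) + (m−1)·f'(r)/r > 0 for all r > 0. Then there exist constants c₁ > 0 and c₂ ∈ ℝ and some b > 0 such that f(r) > c₁·r^{1−m₀} + c₂ for all r > b. Note that 1 − m₀ = n/(n+m−1). -/
/-- Power-law lower bound (inequality (21) of Theorem 2's proof): for integers
`n ≥ 1`, `m ≥ 2`, with `m₀ = (m-1)/(n+m-1)`, if `f` is twice differentiable on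
`(0,∞)` with `f' > 0` there and `(n+m-1) f'' r + (m-1) f' r / r > 0` for all `r > 0`,
then there are `c₁ > 0`, `c₂ ∈ ℝ` and `b > 0` with `f r > c₁ * r ^ (1 - m₀) + c₂`
for all `r > b`. Note `1 - m₀ = n/(n+m-1)`. -/
theorem power_lower_bound (n m : ℕ) (hn : 1 ≤ n) (hm : 2 ≤ m) (f : ℝ → ℝ)
    (hdiff : ∀ r : ℝ, 0 < r → DifferentiableAt ℝ f r)
    (hdiff2 : ∀ r : ℝ, 0 < r → DifferentiableAt ℝ (deriv f) r)
    (hpos : ∀ r : ℝ, 0 < r → 0 < deriv f r)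
    (hineq : ∀ r : ℝ, 0 < r →
      0 < ((n : ℝ) + m - 1) * deriv (deriv f) r + ((m : ℝ) - 1) * deriv f r / r) :
    ∃ c₁ : ℝ, 0 < c₁ ∧ ∃ c₂ b : ℝ, 0 < b ∧ ∀ r : ℝ, b < r →
      c₁ * r ^ (1 - ((m : ℝ) - 1) / ((n : ℝ) + m - 1)) + c₂ < f r := by
  have hn' : (1 : ℝ) ≤ n := by exact_mod_cast hn
  have hm' : (2 : ℝ) ≤ m := by exact_mod_cast hm
  have hN : (0 : ℝ) < (n : ℝ) + m - 1 := by linarith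
  obtain ⟨k, hk⟩ : ∃ k : ℝ, k = ((m : ℝ) - 1) / ((n : ℝ) + m - 1) := ⟨_, rfl⟩
  have hk1 : 0 < 1 - k := by
    have : k < 1 := by
      rw [hk, div_lt_one hN]
      linarith
    linarith
  have hkN : (m : ℝ) - 1 = k * ((n : ℝ) + m - 1) := by
    rw [hk]
    field_simp
  rw [← hk]
  have hineq' : ∀ r : ℝ, 0 < r → 0 < deriv (deriv f) r + k * deriv f r / r := by
    intro r hr
    have h := hineq r hr
    rw [hkN] at h
    have h2 : 0 < ((n : ℝ) + m - 1) * (deriv (deriv f) r + k * deriv f r / r) := by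
      calc _ < _ := h
        _ = _ := by ring
    exact (mul_pos_iff_of_pos_left hN).1 h2
  have hg : ∀ r : ℝ, 0 < r → HasDerivAt (fun x => deriv f x * x ^ k)
      (deriv (deriv f) r * r ^ k + deriv f r * (k * r ^ (k - 1))) r := fun r hr =>
    (hdiff2 r hr).hasDerivAt.mul (Real.hasDerivAt_rpow_const (Or.inl hr.ne'))
  have hgm : MonotoneOn (fun x => deriv f x * x ^ k) (Set.Ici 1) := by
    apply monotoneOn_of_deriv_nonneg (convex_Ici 1)
    · intro x hx
      exact (hg x (lt_of_lt_of_le one_pos hx)).continuousAt.continuousWithinAt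
    · intro x hx
      rw [interior_Ici] at hx
      exact (hg x (lt_trans one_pos hx)).differentiableAt.differentiableWithinAt
    · intro x hx
      rw [interior_Ici] at hx
      have hx0 : 0 < x := lt_trans one_pos hx
      rw [(hg x hx0).deriv, Real.rpow_sub_one hx0.ne']
      have := mul_pos (hineq' x hx0) (Real.rpow_pos_of_pos hx0 k)
      calc (0 : ℝ) ≤ _ := this.le
        _ = _ := by ring
  have hh : ∀ r : ℝ, 0 < r → HasDerivAt (fun x => f x - deriv f 1 / (1 - k) * x ^ (1 - k))
      (deriv f r - deriv f 1 / (1 - k) * ((1 - k) * r ^ (1 - k - 1))) r := fun r hr =>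
    (hdiff r hr).hasDerivAt.sub
      ((Real.hasDerivAt_rpow_const (Or.inl hr.ne')).const_mul _)
  have hhm : MonotoneOn (fun x => f x - deriv f 1 / (1 - k) * x ^ (1 - k)) (Set.Ici 1) := by
    apply monotoneOn_of_deriv_nonneg (convex_Ici 1)
    · intro x hx
      exact (hh x (lt_of_lt_of_le one_pos hx)).continuousAt.continuousWithinAt
    · intro x hx
      rw [interior_Ici] at hx
      exact (hh x (lt_trans one_pos hx)).differentiableAt.differentiableWithinAt
    · intro x hx
      rw [interior_Ici] at hx
      have hx1 : (1 : ℝ) < x := hx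
      have hx0 : 0 < x := lt_trans one_pos hx
      rw [(hh x hx0).deriv, ← mul_assoc, div_mul_cancel₀ _ hk1.ne',
        show 1 - k - 1 = -k by ring, Real.rpow_neg hx0.le, ← div_eq_mul_inv, sub_nonneg,
        div_le_iff₀ (Real.rpow_pos_of_pos hx0 k)]
      have := hgm (Set.mem_Ici.2 le_rfl) (Set.mem_Ici.2 hx1.le) hx1.le
      simpa using this
  refine ⟨deriv f 1 / (1 - k), div_pos (hpos 1 one_pos) hk1,
    f 1 - deriv f 1 / (1 - k) * 1 ^ (1 - k) - 1, 1, one_pos, fun r hr => ?_⟩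
  have := hhm (Set.mem_Ici.2 le_rfl) (Set.mem_Ici.2 hr.le) hr.le
  dsimp only at this
  linarith
end

section
/- Let m ≥ 2 be an integer and let v : ℝ^m → ℝ be three times continuously differentiable. Suppose there is a function p : ℝ^m → ℝ such that for all t ∈ ℝ^m and all indices 1 ≤ i, j ≤ m, the second partial derivatives satisfy ∂ᵢ∂ⱼ v(t) = p(t)·δᵢⱼ, where δᵢⱼ is the Kronecker delta. Then p is a constant function. -/
theorem fderiv_apply_swap_aux {E : Type*} [NormedAddCommGroup E] [NormedSpace ℝ E]
    (g : E → ℝ) (hg : ContDiff ℝ 2 g) (t a b : E) :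
    fderiv ℝ (fun y => fderiv ℝ g y a) t b = fderiv ℝ (fun y => fderiv ℝ g y b) t a := by
  have hd : DifferentiableAt ℝ (fderiv ℝ g) t :=
    ((hg.fderiv_right (m := 1) (by norm_num)).differentiable (by norm_num)) t
  have key : ∀ c d : E, fderiv ℝ (fun y => fderiv ℝ g y c) t d
      = fderiv ℝ (fderiv ℝ g) t d c := by
    intro c d
    rw [fderiv_clm_apply hd (differentiableAt_const c)]
    simp
  rw [key, key]
  exact (hg.contDiffAt.isSymmSndFDerivAt (by simp)) b a

/-- Equations (11)–(13) in the proof of Theorem 1: if `m ≥ 2` and the Euclidean Hessian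
of `v : ℝ^m → ℝ` is pointwise the scalar multiple `p t` of the identity, then `p` is
constant. -/
theorem hessian_scalar_implies_const (m : ℕ) (hm : 2 ≤ m)
    (v : EuclideanSpace ℝ (Fin m) → ℝ) (hv : ContDiff ℝ 3 v)
    (p : EuclideanSpace ℝ (Fin m) → ℝ)
    (hp : ∀ t : EuclideanSpace ℝ (Fin m), ∀ i j : Fin m,
      fderiv ℝ (fun y => fderiv ℝ v y (EuclideanSpace.single j 1)) t
          (EuclideanSpace.single i 1)
        = p t * (if i = j then 1 else 0)) :
    ∀ t t' : EuclideanSpace ℝ (Fin m), p t = p t' := by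
  have hg : ∀ k : Fin m, ContDiff ℝ 2
      (fun y => fderiv ℝ v y (EuclideanSpace.single k (1 : ℝ))) := fun k =>
    (hv.fderiv_right (m := 2) (by norm_num)).clm_apply contDiff_const
  have hpk : ∀ k : Fin m, p = fun t => fderiv ℝ (fun y => fderiv ℝ v y
      (EuclideanSpace.single k (1 : ℝ))) t (EuclideanSpace.single k (1 : ℝ)) := by
    intro k
    funext t
    simp [hp t k k]
  have hdiff : Differentiable ℝ p := by
    rw [hpk ⟨0, by omega⟩]
    exact (((hg _).fderiv_right (m := 1) (by norm_num)).clm_apply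
      contDiff_const).differentiable (by norm_num)
  refine is_const_of_fderiv_eq_zero hdiff ?_
  intro t
  have hzero : ∀ i : Fin m, fderiv ℝ p t (EuclideanSpace.single i (1 : ℝ)) = 0 := by
    intro i
    obtain ⟨k, hk⟩ : ∃ k : Fin m, k ≠ i := by
      haveI : Nontrivial (Fin m) := Fin.nontrivial_iff_two_le.mpr hm
      exact exists_ne i
    rw [hpk k, fderiv_apply_swap_aux _ (hg k)]
    have h0 : (fun y => fderiv ℝ (fun y => fderiv ℝ v y
        (EuclideanSpace.single k (1 : ℝ))) y (EuclideanSpace.single i (1 : ℝ)))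
        = fun _ => (0 : ℝ) := by
      funext y
      rw [hp y i k]
      simp [hk.symm]
    rw [h0]
    simp
  apply ContinuousLinearMap.coe_injective
  refine (EuclideanSpace.basisFun (Fin m) ℝ).toBasis.ext ?_
  intro i
  simpa using hzero i
end
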